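/- Let x^∞ be a sequence over a finite alphabet 𝒳. Then liminf_{k→∞} liminf_{n→∞} (1/k) Ĥ^k(x^n) ≤ liminf_{k→∞} liminf_{n→∞} (1/k) Ĥ^k_sw(x^n) and limsup_{k→∞} limsup_{n→∞} (1/k) Ĥ^k(x^n) ≤ limsup_{k→∞} limsup_{n→∞} (1/k) Ĥ^k_sw(x^n); that is, the block-by-block per-symbol empirical entropy limits are upper-bounded by the corresponding sliding-window quantities. -/

import Mathlib

open Filter

/-- Base-2 Shannon entropy of a finitely-supported distribution given as a function. -/
noncomputable def ent2 {β : Type*} [Fintype β] (q : β → ℝ) : ℝ :=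
  ∑ b, -(q b * Real.logb 2 (q b))

/-- The `k`-th order block-by-block empirical distribution of `x^n`: the fraction of the
`⌊n/k⌋` disjoint `k`-blocks of `x^n` equal to a given word `w`. -/
noncomputable def blockDist {𝒳 : Type*} [DecidableEq 𝒳] (x : ℕ → 𝒳) (k n : ℕ)
    (w : Fin k → 𝒳) : ℝ :=
  (((Finset.range (n / k)).filter
      (fun i => (fun j : Fin k => x (k * i + (j : ℕ))) = w)).card : ℝ) / ((n / k : ℕ) : ℝ)

/-- The `k`-th order block-by-block empirical entropy `Ĥ^k(x^n)` (base 2). -/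
noncomputable def Hblock {𝒳 : Type*} [Fintype 𝒳] [DecidableEq 𝒳] (x : ℕ → 𝒳) (k n : ℕ) : ℝ :=
  ent2 (blockDist x k n)

/-- The `k`-th order sliding-window empirical distribution of `x^n`: the fraction of the
`n−k+1` length-`k` windows of `x^n` equal to a given word `w`. -/
noncomputable def swDist {𝒳 : Type*} [DecidableEq 𝒳] (x : ℕ → 𝒳) (k n : ℕ)
    (w : Fin k → 𝒳) : ℝ :=
  (((Finset.range (n - k + 1)).filter
      (fun i => (fun j : Fin k => x (i + (j : ℕ))) = w)).card : ℝ) / ((n - k + 1 : ℕ) : ℝ)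

/-- The `k`-th order sliding-window empirical entropy `Ĥ^k_sw(x^n)` (base 2). -/
noncomputable def Hsw {𝒳 : Type*} [Fintype 𝒳] [DecidableEq 𝒳] (x : ℕ → 𝒳) (k n : ℕ) : ℝ :=
  ent2 (swDist x k n)

/-! Fix `k ≤ K` and a phase `j < k`. Encode a `K`-block by cutting it, from position `j` on, into
`⌊K / k⌋ - 1` consecutive `k`-windows, each coded at its ideal codelength under the sliding-window
distribution; the fewer than `2k` remaining letters are coded uniformly. By Gibbs' inequality the
average codelength bounds the block entropy, whatever the phase. Over all phases and all blocks,
every window of `x^n` is used at most once, so averaging over `j` gives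
`Ĥ^K / K ≤ Ĥ^k_sw / k + O(k / K) + O(K / n)`. Let `n → ∞`, then `K → ∞`, then `k → ∞`. -/

section Entropy

open Finset Real

lemma logb_two_natCast_nonneg (m : ℕ) : 0 ≤ logb 2 m :=
  div_nonneg (log_natCast_nonneg m) (log_nonneg one_le_two)

variable {β : Type*} [Fintype β]

lemma ent2_nonneg {p : β → ℝ} (hp : ∀ b, p b ∈ Set.Icc 0 1) : 0 ≤ ent2 p :=
  sum_nonneg fun b _ => neg_nonneg.2 <|
    mul_nonpos_of_nonneg_of_nonpos (hp b).1 (logb_nonpos one_lt_two (hp b).1 (hp b).2)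

lemma mul_log_sub_log_le_sub {p q : ℝ} (hp : 0 ≤ p) (hq : 0 ≤ q) (hpq : q = 0 → p = 0) :
    p * (log q - log p) ≤ q - p := by
  rcases hp.eq_or_lt with rfl | hp
  · simpa using hq
  have hq : 0 < q := hq.lt_of_ne fun h => hp.ne' (hpq h.symm)
  calc p * (log q - log p) = p * log (q / p) := by rw [log_div hq.ne' hp.ne']
    _ ≤ p * (q / p - 1) := by gcongr; exact log_le_sub_one_of_pos (div_pos hq hp)
    _ = q - p := by field_simp

lemma ent2_le_sum_neg_mul_logb {p q : β → ℝ} (hp : ∀ b, 0 ≤ p b) (hq : ∀ b, 0 ≤ q b)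
    (hpq : ∀ b, q b = 0 → p b = 0) (hsum : ∑ b, q b ≤ ∑ b, p b) :
    ent2 p ≤ ∑ b, -(p b * logb 2 (q b)) := by
  have hlog : ∑ b, p b * (log (q b) - log (p b)) ≤ 0 :=
    calc ∑ b, p b * (log (q b) - log (p b)) ≤ ∑ b, (q b - p b) :=
          sum_le_sum fun b _ => mul_log_sub_log_le_sub (hp b) (hq b) (hpq b)
      _ ≤ 0 := by rw [sum_sub_distrib]; linarith
  rw [← sub_nonpos, ent2, ← sum_sub_distrib]
  calc ∑ b, (-(p b * logb 2 (p b)) - -(p b * logb 2 (q b)))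
      = (∑ b, p b * (log (q b) - log (p b))) / log 2 := by
        rw [sum_div]
        exact sum_congr rfl fun b _ => by simp only [logb]; ring
    _ ≤ 0 := div_nonpos_of_nonpos_of_nonneg hlog (log_nonneg one_le_two)

lemma ent2_le_logb_card {p : β → ℝ} (hp : ∀ b, 0 ≤ p b) (hsum : ∑ b, p b = 1) :
    ent2 p ≤ logb 2 (Fintype.card β) := by
  have : Nonempty β := by
    by_contra! h
    simp at hsum
  calc ent2 p ≤ ∑ b, -(p b * logb 2 (Fintype.card β : ℝ)⁻¹) :=
        ent2_le_sum_neg_mul_logb hp (fun _ => by positivity)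
          (fun _ h => absurd h (by simp)) (by simp [hsum])
    _ = logb 2 (Fintype.card β) := by
        simp only [logb_inv, mul_neg, neg_neg, ← sum_mul, hsum, one_mul]

end Entropy

section Empirical

open Finset Real

variable {ι β : Type*} [DecidableEq β] (I : Finset ι) (g : ι → β)

/-- The empirical distribution of the values of `g` on the finite index set `I`. By `x / 0 = 0` it
is identically `0` when `I` is empty. -/
noncomputable def empDist (b : β) : ℝ :=
  (#{i ∈ I | g i = b} : ℝ) / #I

lemma empDist_mem_Icc (b : β) : empDist I g b ∈ Set.Icc 0 1 :=
  ⟨by unfold empDist; positivity,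
    div_le_one_of_le₀ (by exact_mod_cast card_filter_le _ _) (by positivity)⟩

variable {I g} in
lemma empDist_pos_iff {b : β} : 0 < empDist I g b ↔ ∃ i ∈ I, g i = b := by
  constructor
  · contrapose!
    intro h
    simp [empDist, filter_eq_empty_iff.2 h]
  · rintro ⟨i, hi, rfl⟩
    have h₁ : 0 < #{j ∈ I | g j = g i} := card_pos.2 ⟨i, by simp [hi]⟩
    have h₂ : 0 < #I := card_pos.2 ⟨i, hi⟩
    unfold empDist
    positivity

variable [Fintype β]

lemma card_mul_sum_empDist_mul (F : β → ℝ) :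
    #I * ∑ b, empDist I g b * F b = ∑ i ∈ I, F (g i) := by
  rcases I.eq_empty_or_nonempty with rfl | hI
  · simp
  have hI : (#I : ℝ) ≠ 0 := by exact_mod_cast hI.card_ne_zero
  rw [← sum_fiberwise' I g F, mul_sum]
  refine sum_congr rfl fun b _ => ?_
  rw [sum_const, nsmul_eq_mul, empDist]
  field_simp

variable {I} in
lemma sum_empDist (hI : I.Nonempty) : ∑ b, empDist I g b = 1 := by
  have hI : (#I : ℝ) ≠ 0 := by exact_mod_cast hI.card_ne_zero
  simpa [hI] using card_mul_sum_empDist_mul I g fun _ => 1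

lemma card_mul_ent2_empDist :
    #I * ent2 (empDist I g) = ∑ i ∈ I, -logb 2 (empDist I g (g i)) := by
  simpa only [ent2, mul_neg] using
    card_mul_sum_empDist_mul I g fun b => -logb 2 (empDist I g b)

lemma card_mul_ent2_empDist_le {q : β → ℝ} (hq : ∀ b, 0 ≤ q b) (hsum : ∑ b, q b ≤ 1)
    (hpos : ∀ i ∈ I, 0 < q (g i)) :
    #I * ent2 (empDist I g) ≤ ∑ i ∈ I, -logb 2 (q (g i)) := by
  rcases I.eq_empty_or_nonempty with rfl | hI
  · simp
  rw [← card_mul_sum_empDist_mul I g fun b => -logb 2 (q b)]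
  simp only [mul_neg]
  gcongr
  refine ent2_le_sum_neg_mul_logb (fun b => (empDist_mem_Icc I g b).1) hq (fun b hb => ?_)
    (by rwa [sum_empDist g hI])
  by_contra h
  obtain ⟨i, hi, rfl⟩ := empDist_pos_iff.1 ((empDist_mem_Icc I g b).1.lt_of_ne' h)
  exact (hpos i hi).ne' hb

lemma ent2_empDist_mem_Icc : ent2 (empDist I g) ∈ Set.Icc 0 (logb 2 (Fintype.card β)) := by
  refine ⟨ent2_nonneg (empDist_mem_Icc I g), ?_⟩
  rcases I.eq_empty_or_nonempty with rfl | hI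
  · simpa [ent2, empDist] using logb_two_natCast_nonneg (Fintype.card β)
  · exact ent2_le_logb_card (fun b => (empDist_mem_Icc I g b).1) (sum_empDist g hI)

end Empirical

section PrefixMass

open Finset

variable {𝒳 : Type*} [Fintype 𝒳]

/-- `Q y` is the mass which some sub-probability mass function on words of length `m` gives to the
prefix of length `m` of the sequence `y`. Evaluating on sequences makes concatenation a matter of
shifting, with no transport of words `Fin m → 𝒳` along equalities of lengths. -/
def IsPrefixMass (m : ℕ) (Q : (ℕ → 𝒳) → ℝ) : Prop :=
  ∃ q : (Fin m → 𝒳) → ℝ, (∀ w, 0 ≤ q w) ∧ ∑ w, q w ≤ 1 ∧ ∀ y, Q y = q fun i => y i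

namespace IsPrefixMass

variable {k a b : ℕ} {Q R : (ℕ → 𝒳) → ℝ}

lemma uniform (m : ℕ) :
    IsPrefixMass m fun _ : ℕ → 𝒳 => ((Fintype.card 𝒳 : ℝ) ^ m)⁻¹ :=
  ⟨fun _ => ((Fintype.card 𝒳 : ℝ) ^ m)⁻¹, fun _ => by positivity,
    by simpa using mul_inv_le_one, fun _ => rfl⟩

lemma append (hQ : IsPrefixMass a Q) (hR : IsPrefixMass b R) :
    IsPrefixMass (a + b) fun y => Q y * R fun i => y (a + i) := by
  obtain ⟨q, hq, hqsum, hqQ⟩ := hQ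
  obtain ⟨r, hr, hrsum, hrR⟩ := hR
  refine ⟨fun w => q (fun i => w (Fin.castAdd b i)) * r (fun i => w (Fin.natAdd a i)),
    fun w => mul_nonneg (hq _) (hr _), ?_, fun y => ?_⟩
  · rw [← (Fin.appendEquiv a b).sum_comp, Fintype.sum_prod_type]
    simp only [Fin.appendEquiv, Equiv.coe_fn_mk, Fin.append_left, Fin.append_right]
    rw [← sum_mul_sum]
    exact mul_le_one₀ hqsum (sum_nonneg fun w _ => hr w) hrsum
  · simp only [hqQ, hrR, Fin.val_castAdd, Fin.val_natAdd]

lemma replicate (hQ : IsPrefixMass k Q) (t : ℕ) :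
    IsPrefixMass (k * t) fun y => ∏ u ∈ range t, Q fun i => y (k * u + i) := by
  induction t with
  | zero => simpa using uniform (𝒳 := 𝒳) 0
  | succ t ih => simpa only [prod_range_succ, Nat.mul_succ] using ih.append hQ

lemma replicate_pad {j t K : ℕ} (hQ : IsPrefixMass k Q) (h : j + k * t ≤ K) :
    IsPrefixMass K fun y => ((Fintype.card 𝒳 : ℝ) ^ (K - k * t))⁻¹ *
      ∏ u ∈ range t, Q fun i => y (k * u + j + i) := by
  obtain ⟨r, rfl⟩ := Nat.exists_eq_add_of_le h
  convert ((uniform j).append (hQ.replicate t)).append (uniform r) using 2 with y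
  rw [show j + k * t + r - k * t = j + r by omega, pow_add, mul_inv]
  simp only [add_assoc, add_left_comm]
  ring

end IsPrefixMass

end PrefixMass

section SumRange

open Finset

variable {M : Type*} [AddCommMonoid M]

lemma sum_range_sum_range_mul_add (F : ℕ → M) (k t : ℕ) :
    ∑ u ∈ range t, ∑ j ∈ range k, F (k * u + j) = ∑ v ∈ range (k * t), F v := by
  induction t with
  | zero => simp
  | succ t ih => rw [sum_range_succ, ih, Nat.mul_succ, sum_range_add]

lemma sum_range_sum_range_mul_add_le [PartialOrder M] [IsOrderedAddMonoid M] {F : ℕ → M}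
    (hF : ∀ s, 0 ≤ F s) {K m N R : ℕ} (hm : m ≤ K) (hR : ∀ i < N, K * i + m ≤ R) :
    ∑ i ∈ range N, ∑ v ∈ range m, F (K * i + v) ≤ ∑ s ∈ range R, F s := by
  rcases N with _ | N
  · simpa using sum_nonneg fun s _ => hF s
  calc ∑ i ∈ range (N + 1), ∑ v ∈ range m, F (K * i + v)
      ≤ ∑ i ∈ range N, ∑ v ∈ range K, F (K * i + v) + ∑ v ∈ range m, F (K * N + v) := by
        rw [sum_range_succ]
        gcongr with i
        exact fun _ _ _ => hF _
    _ = ∑ s ∈ range (K * N + m), F s := by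
        rw [sum_range_sum_range_mul_add, sum_range_add]
    _ ≤ ∑ s ∈ range R, F s :=
        sum_le_sum_of_subset_of_nonneg (range_mono (hR N N.lt_succ_self)) fun _ _ _ => hF _

end SumRange

lemma exists_mul_add_le_and_le_mul_add {k K : ℕ} (hk : 0 < k) (hkK : k ≤ K) :
    ∃ t, k * t + k ≤ K ∧ K ≤ k * t + 2 * k := by
  obtain ⟨t, ht⟩ := Nat.exists_eq_succ_of_ne_zero (Nat.div_pos hkK hk).ne'
  have hdiv := Nat.div_add_mod K k
  have hmod := Nat.mod_lt K hk
  rw [ht, Nat.mul_succ] at hdiv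
  exact ⟨t, by omega, by omega⟩

section BlockVersusWindow

open Finset Real

variable {𝒳 : Type*} [DecidableEq 𝒳] (x : ℕ → 𝒳)

lemma blockDist_eq_empDist (k n : ℕ) :
    blockDist x k n = empDist (range (n / k)) fun i (j : Fin k) => x (k * i + j) := by
  funext w
  simp only [blockDist, empDist, card_range]

lemma swDist_eq_empDist (k n : ℕ) :
    swDist x k n = empDist (range (n - k + 1)) fun i (j : Fin k) => x (i + j) := by
  funext w
  simp only [swDist, empDist, card_range]

lemma swDist_window_pos {k n s : ℕ} (hs : s + k ≤ n) :
    0 < swDist x k n fun j => x (s + j) := by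
  rw [swDist_eq_empDist]
  exact empDist_pos_iff.2 ⟨s, mem_range.2 (by omega), rfl⟩

/-- The surprisal of the `k`-window of `x` starting at `s`: its ideal codelength, in bits, under
the sliding-window distribution of `x^n`. -/
noncomputable def swSurprisal (k n s : ℕ) : ℝ :=
  -logb 2 (swDist x k n fun j => x (s + j))

lemma swSurprisal_nonneg (k n s : ℕ) : 0 ≤ swSurprisal x k n s := by
  rw [swSurprisal, swDist_eq_empDist, neg_nonneg]
  have h := empDist_mem_Icc (range (n - k + 1)) (fun i (j : Fin k) => x (i + j))
    fun j => x (s + j)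
  exact logb_nonpos one_lt_two h.1 h.2

variable [Fintype 𝒳]

lemma isPrefixMass_swDist (k n : ℕ) : IsPrefixMass k fun y => swDist x k n fun j => y j := by
  refine ⟨swDist x k n, ?_, ?_, fun _ => rfl⟩ <;> rw [swDist_eq_empDist]
  · exact fun w => (empDist_mem_Icc _ _ w).1
  · exact (sum_empDist _ nonempty_range_add_one).le

lemma mul_Hsw_eq_sum_swSurprisal (k n : ℕ) :
    (n - k + 1 : ℕ) * Hsw x k n = ∑ s ∈ range (n - k + 1), swSurprisal x k n s := by
  simpa only [Hsw, swSurprisal, swDist_eq_empDist, card_range] using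
    card_mul_ent2_empDist (range (n - k + 1)) fun i (j : Fin k) => x (i + j)

variable {x} in
lemma IsPrefixMass.mul_Hblock_le {K n : ℕ} {Q : (ℕ → 𝒳) → ℝ} (hQ : IsPrefixMass K Q)
    (hpos : ∀ i < n / K, 0 < Q fun j => x (K * i + j)) :
    (n / K : ℕ) * Hblock x K n ≤ ∑ i ∈ range (n / K), -logb 2 (Q fun j => x (K * i + j)) := by
  obtain ⟨q, hq, hqsum, hqQ⟩ := hQ
  simp only [hqQ] at hpos ⊢
  simpa only [Hblock, blockDist_eq_empDist, card_range] using
    card_mul_ent2_empDist_le (range (n / K)) (fun i (j : Fin K) => x (K * i + j)) hq hqsum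
      fun i hi => hpos i (mem_range.1 hi)

lemma mul_Hblock_le_sum_swSurprisal {j k t K : ℕ} (h : j + k * t ≤ K) (n : ℕ) :
    (n / K : ℕ) * Hblock x K n ≤
      ∑ i ∈ range (n / K), ((K - k * t : ℕ) * logb 2 (Fintype.card 𝒳) +
        ∑ u ∈ range t, swSurprisal x k n (K * i + (k * u + j))) := by
  have hcard : (0 : ℝ) < Fintype.card 𝒳 := by exact_mod_cast Fintype.card_pos_iff.2 ⟨x 0⟩
  have hwindow : ∀ i < n / K, ∀ u < t,
      0 < swDist x k n fun l => x (K * i + (k * u + j) + l) := by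
    intro i hi u hu
    have hblock : K * (i + 1) ≤ n := (Nat.mul_le_mul_left K hi).trans (Nat.mul_div_le n K)
    have hphase : k * (u + 1) ≤ k * t := Nat.mul_le_mul_left k hu
    rw [Nat.mul_succ] at hblock hphase
    exact swDist_window_pos x (by omega)
  have hprod : ∀ i < n / K,
      0 < ∏ u ∈ range t, swDist x k n fun l => x (K * i + (k * u + j) + l) :=
    fun i hi => prod_pos fun u hu => hwindow i hi u (mem_range.1 hu)
  have hcode := ((isPrefixMass_swDist x k n).replicate_pad h).mul_Hblock_le (x := x) (n := n)
  simp only [← add_assoc] at hcode hprod hwindow ⊢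
  refine (hcode fun i hi => mul_pos (by positivity) (hprod i hi)).trans_eq
    (sum_congr rfl fun i hi => ?_)
  rw [mem_range] at hi
  rw [logb_mul (by positivity) (hprod i hi).ne', neg_add, logb_inv, neg_neg, logb_pow,
    logb_prod _ _ fun u hu => (hwindow i hi u (mem_range.1 hu)).ne', ← sum_neg_distrib]
  rfl

lemma sum_phases_swSurprisal_le {k t K : ℕ} (h : k * t + k ≤ K) (n : ℕ) :
    ∑ j ∈ range k, ∑ i ∈ range (n / K), ∑ u ∈ range t,
      swSurprisal x k n (K * i + (k * u + j)) ≤ (n - k + 1 : ℕ) * Hsw x k n := by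
  calc _ = ∑ i ∈ range (n / K), ∑ v ∈ range (k * t), swSurprisal x k n (K * i + v) := by
        rw [sum_comm]
        refine sum_congr rfl fun i _ => ?_
        rw [sum_comm, sum_range_sum_range_mul_add fun v => swSurprisal x k n (K * i + v)]
    _ ≤ ∑ s ∈ range (n - k + 1), swSurprisal x k n s := by
        refine sum_range_sum_range_mul_add_le (swSurprisal_nonneg x k n) (by omega) fun i hi => ?_
        have hblock : K * (i + 1) ≤ n := (Nat.mul_le_mul_left K hi).trans (Nat.mul_div_le n K)
        rw [Nat.mul_succ] at hblock
        omega
    _ = (n - k + 1 : ℕ) * Hsw x k n := (mul_Hsw_eq_sum_swSurprisal x k n).symm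

lemma mul_mul_Hblock_le_mul_Hsw_add {k t K : ℕ} (h : k * t + k ≤ K) (n : ℕ) :
    k * ((n / K : ℕ) * Hblock x K n) ≤ (n - k + 1 : ℕ) * Hsw x k n +
      k * ((n / K : ℕ) * ((K - k * t : ℕ) * logb 2 (Fintype.card 𝒳))) := by
  calc k * ((n / K : ℕ) * Hblock x K n)
      = ∑ _j ∈ range k, (n / K : ℕ) * Hblock x K n := by simp
    _ ≤ ∑ j ∈ range k, ∑ i ∈ range (n / K), ((K - k * t : ℕ) * logb 2 (Fintype.card 𝒳) +
          ∑ u ∈ range t, swSurprisal x k n (K * i + (k * u + j))) := by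
        refine sum_le_sum fun j hj => mul_Hblock_le_sum_swSurprisal x ?_ n
        rw [mem_range] at hj
        omega
    _ = ∑ j ∈ range k, ∑ i ∈ range (n / K), ∑ u ∈ range t,
          swSurprisal x k n (K * i + (k * u + j)) +
        k * ((n / K : ℕ) * ((K - k * t : ℕ) * logb 2 (Fintype.card 𝒳))) := by
        simp only [sum_add_distrib, sum_const, card_range, nsmul_eq_mul]
        ring
    _ ≤ _ := by gcongr; exact sum_phases_swSurprisal_le x h n

end BlockVersusWindow

section Rates

open Real

lemma one_div_mul_mem_Icc {c H L : ℝ} (hc : 0 ≤ c) (hL : 0 ≤ L) (hH : H ∈ Set.Icc 0 (c * L)) :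
    1 / c * H ∈ Set.Icc 0 L := by
  rw [one_div_mul_eq_div]
  exact ⟨div_nonneg hH.1 hc, div_le_of_le_mul₀ hc hL (by rw [mul_comm]; exact hH.2)⟩

variable {𝒳 : Type*} [Fintype 𝒳]

lemma logb_card_words (k : ℕ) :
    logb 2 (Fintype.card (Fin k → 𝒳)) = k * logb 2 (Fintype.card 𝒳) := by
  rw [Fintype.card_fun, Fintype.card_fin, Nat.cast_pow, logb_pow]

variable [DecidableEq 𝒳] (x : ℕ → 𝒳)

lemma Hblock_div_mem_Icc (k n : ℕ) :
    1 / (k : ℝ) * Hblock x k n ∈ Set.Icc 0 (logb 2 (Fintype.card 𝒳)) := by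
  refine one_div_mul_mem_Icc k.cast_nonneg (logb_two_natCast_nonneg _) ?_
  rw [Hblock, blockDist_eq_empDist, ← logb_card_words]
  exact ent2_empDist_mem_Icc _ _

lemma Hsw_div_mem_Icc (k n : ℕ) :
    1 / (k : ℝ) * Hsw x k n ∈ Set.Icc 0 (logb 2 (Fintype.card 𝒳)) := by
  refine one_div_mul_mem_Icc k.cast_nonneg (logb_two_natCast_nonneg _) ?_
  rw [Hsw, swDist_eq_empDist, ← logb_card_words]
  exact ent2_empDist_mem_Icc _ _

lemma Hblock_div_le_Hsw_div_add {k K n : ℕ} (hk : 0 < k) (hkK : k ≤ K) (hKn : K ≤ n) :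
    1 / (K : ℝ) * Hblock x K n ≤ 1 / (k : ℝ) * Hsw x k n +
      (logb 2 (Fintype.card 𝒳) / (n / K : ℕ) + 2 * k * logb 2 (Fintype.card 𝒳) / K) := by
  obtain ⟨t, htK, hKt⟩ := exists_mul_add_le_and_le_mul_add hk hkK
  have haverage := mul_mul_Hblock_le_mul_Hsw_add x htK n
  have hL := logb_two_natCast_nonneg (Fintype.card 𝒳)
  obtain ⟨hS₀, hSL⟩ := Hsw_div_mem_Icc x k n
  have hk' : (0 : ℝ) < k := by exact_mod_cast hk
  have hK' : (0 : ℝ) < K := by exact_mod_cast hk.trans_le hkK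
  have hN : (0 : ℝ) < (n / K : ℕ) := by exact_mod_cast Nat.div_pos hKn (hk.trans_le hkK)
  have hleft : ((K - k * t : ℕ) : ℝ) ≤ 2 * k := by exact_mod_cast (by omega)
  have hwindows : ((n - k + 1 : ℕ) : ℝ) ≤ K * (n / K : ℕ) + K := by
    have hdiv := Nat.div_add_mod n K
    have hmod := Nat.mod_lt n (hk.trans_le hkK)
    exact_mod_cast (by omega : n - k + 1 ≤ K * (n / K) + K)
  set L := logb 2 (Fintype.card 𝒳)
  set N := ((n / K : ℕ) : ℝ)
  set S := 1 / (k : ℝ) * Hsw x k n with hS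
  have hHsw : Hsw x k n = k * S := by
    rw [hS, ← mul_assoc, mul_one_div_cancel hk'.ne', one_mul]
  calc 1 / (K : ℝ) * Hblock x K n = k * (N * Hblock x K n) / (k * N * K) := by field_simp
    _ ≤ ((K * N + K) * (k * S) + k * (N * (2 * k * L))) / (k * N * K) := by
        rw [hHsw] at haverage
        gcongr
        exact haverage.trans (by gcongr)
    _ = S + (S / N + 2 * k * L / K) := by field_simp; ring
    _ ≤ S + (L / N + 2 * k * L / K) := by gcongr

end Rates

section Limits

open Topology

lemma tendsto_const_div_natDiv_add_const {K : ℕ} (hK : 0 < K) (L c : ℝ) :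
    Tendsto (fun n : ℕ => L / (n / K : ℕ) + c) atTop (𝓝 c) := by
  simpa using (tendsto_const_nhds.div_atTop (tendsto_natCast_atTop_atTop.comp
    (Nat.tendsto_div_const_atTop hK.ne'))).add_const c

variable {ι κ α : Type*} {f : Filter ι}

lemma isBoundedUnder_le_of_forall_mem_Icc [Preorder α] {u : ι → α} {a b : α}
    (hu : ∀ i, u i ∈ Set.Icc a b) :
    f.IsBoundedUnder (· ≤ ·) u :=
  isBoundedUnder_of ⟨b, fun i => (hu i).2⟩

lemma isBoundedUnder_ge_of_forall_mem_Icc [Preorder α] {u : ι → α} {a b : α}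
    (hu : ∀ i, u i ∈ Set.Icc a b) :
    f.IsBoundedUnder (· ≥ ·) u :=
  isBoundedUnder_of ⟨a, fun i => (hu i).1⟩

variable [f.NeBot]

lemma limsup_mem_Icc [ConditionallyCompleteLinearOrder α] {u : ι → α} {a b : α}
    (hu : ∀ i, u i ∈ Set.Icc a b) : limsup u f ∈ Set.Icc a b :=
  ⟨le_limsup_of_frequently_le (Frequently.of_forall fun i => (hu i).1)
      (isBoundedUnder_le_of_forall_mem_Icc hu),
    limsup_le_of_le (isBoundedUnder_ge_of_forall_mem_Icc hu).isCoboundedUnder_le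
      (Eventually.of_forall fun i => (hu i).2)⟩

lemma liminf_mem_Icc [ConditionallyCompleteLinearOrder α] {u : ι → α} {a b : α}
    (hu : ∀ i, u i ∈ Set.Icc a b) : liminf u f ∈ Set.Icc a b :=
  ⟨le_liminf_of_le (isBoundedUnder_le_of_forall_mem_Icc hu).isCoboundedUnder_ge
      (Eventually.of_forall fun i => (hu i).1),
    liminf_le_of_frequently_le (Frequently.of_forall fun i => (hu i).2)
      (isBoundedUnder_ge_of_forall_mem_Icc hu)⟩

variable {u v w : ι → ℝ} {c : ℝ}

lemma liminf_le_liminf_add_of_tendsto (hu : f.IsBoundedUnder (· ≥ ·) u)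
    (hv_le : f.IsBoundedUnder (· ≤ ·) v) (hv_ge : f.IsBoundedUnder (· ≥ ·) v)
    (hw : Tendsto w f (𝓝 c)) (h : ∀ᶠ i in f, u i ≤ v i + w i) :
    liminf u f ≤ liminf v f + c := by
  calc liminf u f ≤ liminf (w + v) f :=
        liminf_le_liminf (h.mono fun i hi => hi.trans_eq (add_comm _ _)) hu
          (isBoundedUnder_le_add hw.isBoundedUnder_le hv_le).isCoboundedUnder_ge
    _ ≤ limsup w f + liminf v f :=
        liminf_add_le hw.isBoundedUnder_ge hw.isBoundedUnder_le hv_ge hv_le.isCoboundedUnder_ge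
    _ = liminf v f + c := by rw [hw.limsup_eq, add_comm]

lemma limsup_le_limsup_add_of_tendsto (hu : f.IsBoundedUnder (· ≥ ·) u)
    (hv_le : f.IsBoundedUnder (· ≤ ·) v) (hv_ge : f.IsBoundedUnder (· ≥ ·) v)
    (hw : Tendsto w f (𝓝 c)) (h : ∀ᶠ i in f, u i ≤ v i + w i) :
    limsup u f ≤ limsup v f + c := by
  calc limsup u f ≤ limsup (v + w) f :=
        limsup_le_limsup h hu.isCoboundedUnder_le (isBoundedUnder_le_add hv_le hw.isBoundedUnder_le)
    _ ≤ limsup v f + limsup w f :=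
        limsup_add_le hv_ge hv_le hw.isBoundedUnder_ge.isCoboundedUnder_le hw.isBoundedUnder_le
    _ = limsup v f + c := by rw [hw.limsup_eq]

lemma limsup_le_liminf_of_le_add_tendsto_zero {g : Filter κ} {v : κ → ℝ} {w : κ → ι → ℝ}
    (hu : f.IsCoboundedUnder (· ≤ ·) u) (hv : g.IsCoboundedUnder (· ≥ ·) v)
    (hw : ∀ k, Tendsto (w k) f (𝓝 0)) (h : ∀ᶠ k in g, ∀ᶠ i in f, u i ≤ v k + w k i) :
    limsup u f ≤ liminf v g := by
  refine le_liminf_of_le hv ?_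
  filter_upwards [h] with k hk
  have htendsto : Tendsto (fun i => v k + w k i) f (𝓝 (v k)) := by
    simpa using (hw k).const_add (v k)
  exact (limsup_le_limsup hk hu htendsto.isBoundedUnder_le).trans_eq htendsto.limsup_eq

end Limits

section LimitRates

open Real Topology

variable {𝒳 : Type*} [Fintype 𝒳] [DecidableEq 𝒳] (x : ℕ → 𝒳)

lemma liminf_Hblock_div_le {k K : ℕ} (hk : 0 < k) (hkK : k ≤ K) :
    liminf (fun n => 1 / (K : ℝ) * Hblock x K n) atTop ≤
      liminf (fun n => 1 / (k : ℝ) * Hsw x k n) atTop +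
        2 * k * logb 2 (Fintype.card 𝒳) / K :=
  liminf_le_liminf_add_of_tendsto
    (isBoundedUnder_ge_of_forall_mem_Icc (Hblock_div_mem_Icc x K))
    (isBoundedUnder_le_of_forall_mem_Icc (Hsw_div_mem_Icc x k))
    (isBoundedUnder_ge_of_forall_mem_Icc (Hsw_div_mem_Icc x k))
    (tendsto_const_div_natDiv_add_const (hk.trans_le hkK) _ _)
    ((eventually_ge_atTop K).mono fun _ => Hblock_div_le_Hsw_div_add x hk hkK)

lemma limsup_Hblock_div_le {k K : ℕ} (hk : 0 < k) (hkK : k ≤ K) :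
    limsup (fun n => 1 / (K : ℝ) * Hblock x K n) atTop ≤
      limsup (fun n => 1 / (k : ℝ) * Hsw x k n) atTop +
        2 * k * logb 2 (Fintype.card 𝒳) / K :=
  limsup_le_limsup_add_of_tendsto
    (isBoundedUnder_ge_of_forall_mem_Icc (Hblock_div_mem_Icc x K))
    (isBoundedUnder_le_of_forall_mem_Icc (Hsw_div_mem_Icc x k))
    (isBoundedUnder_ge_of_forall_mem_Icc (Hsw_div_mem_Icc x k))
    (tendsto_const_div_natDiv_add_const (hk.trans_le hkK) _ _)
    ((eventually_ge_atTop K).mono fun _ => Hblock_div_le_Hsw_div_add x hk hkK)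

theorem limsup_liminf_Hblock_le_liminf_liminf_Hsw :
    limsup (fun k : ℕ => liminf (fun n => 1 / (k : ℝ) * Hblock x k n) atTop) atTop ≤
      liminf (fun k : ℕ => liminf (fun n => 1 / (k : ℝ) * Hsw x k n) atTop) atTop :=
  limsup_le_liminf_of_le_add_tendsto_zero
    (isBoundedUnder_ge_of_forall_mem_Icc fun k =>
      liminf_mem_Icc (Hblock_div_mem_Icc x k)).isCoboundedUnder_le
    (isBoundedUnder_le_of_forall_mem_Icc fun k =>
      liminf_mem_Icc (Hsw_div_mem_Icc x k)).isCoboundedUnder_ge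
    (fun _ => tendsto_const_div_atTop_nhds_zero_nat _)
    ((eventually_gt_atTop 0).mono fun k hk =>
      (eventually_ge_atTop k).mono fun _ => liminf_Hblock_div_le x hk)

theorem limsup_limsup_Hblock_le_liminf_limsup_Hsw :
    limsup (fun k : ℕ => limsup (fun n => 1 / (k : ℝ) * Hblock x k n) atTop) atTop ≤
      liminf (fun k : ℕ => limsup (fun n => 1 / (k : ℝ) * Hsw x k n) atTop) atTop :=
  limsup_le_liminf_of_le_add_tendsto_zero
    (isBoundedUnder_ge_of_forall_mem_Icc fun k =>
      limsup_mem_Icc (Hblock_div_mem_Icc x k)).isCoboundedUnder_le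
    (isBoundedUnder_le_of_forall_mem_Icc fun k =>
      limsup_mem_Icc (Hsw_div_mem_Icc x k)).isCoboundedUnder_ge
    (fun _ => tendsto_const_div_atTop_nhds_zero_nat _)
    ((eventually_gt_atTop 0).mono fun k hk =>
      (eventually_ge_atTop k).mono fun _ => limsup_Hblock_div_le x hk)

end LimitRates

/-- The paper's Lemma 7 (Appendix A): the block-by-block per-symbol empirical entropy
limits are upper-bounded by the corresponding sliding-window quantities. -/
theorem block_le_sliding {𝒳 : Type*} [Fintype 𝒳] [DecidableEq 𝒳] (x : ℕ → 𝒳) :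
    (liminf (fun k : ℕ => liminf (fun n : ℕ => (1 / (k : ℝ)) * Hblock x k n) atTop) atTop
      ≤ liminf (fun k : ℕ => liminf (fun n : ℕ => (1 / (k : ℝ)) * Hsw x k n) atTop) atTop)
    ∧ (limsup (fun k : ℕ => limsup (fun n : ℕ => (1 / (k : ℝ)) * Hblock x k n) atTop) atTop
      ≤ limsup (fun k : ℕ => limsup (fun n : ℕ => (1 / (k : ℝ)) * Hsw x k n) atTop) atTop) := by
  have hblock_liminf := fun k => liminf_mem_Icc (f := atTop) (Hblock_div_mem_Icc x k)
  have hsw_limsup := fun k => limsup_mem_Icc (f := atTop) (Hsw_div_mem_Icc x k)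
  constructor
  · exact (liminf_le_limsup (isBoundedUnder_le_of_forall_mem_Icc hblock_liminf)
      (isBoundedUnder_ge_of_forall_mem_Icc hblock_liminf)).trans
      (limsup_liminf_Hblock_le_liminf_liminf_Hsw x)
  · exact (limsup_limsup_Hblock_le_liminf_limsup_Hsw x).trans
      (liminf_le_limsup (isBoundedUnder_le_of_forall_mem_Icc hsw_limsup)
        (isBoundedUnder_ge_of_forall_mem_Icc hsw_limsup))
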